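/- arXiv:1512.03992 — 2 statements merged into one kernel-verified Lean document; each statement's English description precedes it below -/
import Mathlib

section
/- Let Θ be a random variable with the unit exponential distribution, independent of F_∞ := σ(N_s : s ≥ 0), let τ := inf{t ≥ 0 : N_t ≥ Θ}, let γ := 1 − e^{−1}, and for a bounded Borel function h : ℕ → ℝ define h̃(x) := E[ ∫_0^∞ γ λ h(N_s + x) e^{−N_s} ds ] for x ∈ ℕ. Then for every t ≥ 0, E[ h(N_{τ−}) | G_t ] = 1_{τ ≤ t} · h(N_{τ−}) + 1_{τ > t} · h̃(N_t) almost surely, where N_{τ−}(ω) := sup_{s < τ(ω)} N_s(ω). -/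
/-!
A Poisson path almost surely takes every value in `ℕ`: it is unbounded, and two jumps at the same
time have probability zero because an interval of length `d` carries two or more jumps with
probability `O(d²)` (`IsPoissonProcess.ae_exists_eq`). Hence the last value before the level `Θ`
is reached is a function of `Θ` alone, `N_{τ-} = ⌈Θ⌉ - 1` (`floor_Nminus`), and
`{t < τ} = {N_t < Θ}` almost surely (`lt_tau_iff`).

Since `Θ` is unit exponential,
`E[h(⌈Θ⌉ - 1); Θ > n] = ∑_{k ≥ n} h(k) (e^{-k} - e^{-k-1}) = e^{-n} ∑_j γ h(n + j) e^{-j}`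
(`hasSum_threshold`). The Poisson process spends an expected time `1 / lam` in each state
(`IsPoissonProcess.occupation`), so Fubini identifies the last series as `h̃(n)`
(`IsPoissonProcess.hasSum_til`). The factor `e^{-n}` is `P(Θ > n)`; decomposing according to the
value of `N_t` and using the independence of `Θ` and `F_t`, the integrals of `h(N_{τ-})` and of
`h̃(N_t)` over `B ∩ {t < τ}` agree for all `B ∈ F_t` (`setIntegral_pre_tau`).

On `{t < τ}` every set of `G_t` coincides with a set of `F_t` (`progEnl_trace`), and
`1_{τ ≤ t} h(N_{τ-})` is `G_t`-measurable (`measurable_Nminus_progEnl`); this yields the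
characterization of the conditional expectation by integrals over sets of `G_t`.
-/


open MeasureTheory ProbabilityTheory Filter Set
open scoped ENNReal

noncomputable section

/-- The natural filtration of a process `N`: `F_t = σ(N_u : u ≤ t)`. -/
def natFil {Ω : Type*} (N : ℝ → Ω → ℝ) (t : ℝ) : MeasurableSpace Ω :=
  ⨆ (u : ℝ) (_ : u ≤ t), MeasurableSpace.comap (N u) inferInstance

/-- The σ-algebra `F_∞ = σ(N_s : s ≥ 0)` generated by the whole process. -/
def natFilInf {Ω : Type*} (N : ℝ → Ω → ℝ) : MeasurableSpace Ω :=
  ⨆ (u : ℝ) (_ : (0 : ℝ) ≤ u), MeasurableSpace.comap (N u) inferInstance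

/-- The progressive enlargement `G_t = F_t ⊔ σ({τ ≤ s} : s ≤ t)` of the natural
filtration of `N` by the random time `τ`. -/
def progEnl {Ω : Type*} (N : ℝ → Ω → ℝ) (τ : Ω → ℝ) (t : ℝ) : MeasurableSpace Ω :=
  natFil N t ⊔
    MeasurableSpace.generateFrom {A : Set Ω | ∃ s : ℝ, s ≤ t ∧ A = {ω | τ ω ≤ s}}

/-- `N` is a Poisson process with intensity `lam > 0` (extended by `0` to negative
times): paths are nondecreasing, right-continuous and `ℕ`-valued, and for
`0 ≤ s ≤ t` the increment `N_t - N_s` is independent of `F_s = σ(N_u : u ≤ s)` and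
Poisson distributed with parameter `lam * (t - s)`. -/
structure IsPoissonProcess {Ω : Type*} {m0 : MeasurableSpace Ω} (P : MeasureTheory.Measure Ω)
    (N : ℝ → Ω → ℝ) (lam : ℝ) : Prop where
  lam_pos : 0 < lam
  meas : ∀ t : ℝ, Measurable (N t)
  zero : ∀ ω, ∀ t : ℝ, t ≤ 0 → N t ω = 0
  mono : ∀ ω, Monotone fun t => N t ω
  rightCont : ∀ ω, ∀ t : ℝ, ContinuousWithinAt (fun s => N s ω) (Set.Ici t) t
  natValued : ∀ (t : ℝ) (ω : Ω), ∃ n : ℕ, N t ω = n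
  indep : ∀ s t : ℝ, 0 ≤ s → s ≤ t →
    ProbabilityTheory.Indep
      (MeasurableSpace.comap (fun ω => N t ω - N s ω) inferInstance) (natFil N s) P
  law : ∀ s t : ℝ, 0 ≤ s → s ≤ t → ∀ n : ℕ,
    P {ω | N t ω - N s ω = (n : ℝ)} =
      ENNReal.ofReal (Real.exp (-(lam * (t - s))) * (lam * (t - s)) ^ n / (n.factorial : ℝ))

/-! ### Path properties of the Poisson process -/

namespace IsPoissonProcess

variable {Ω : Type*} {m0 : MeasurableSpace Ω} {P : Measure Ω} {N : ℝ → Ω → ℝ} {lam : ℝ}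

lemma law_zero (hN : IsPoissonProcess P N lam) {t : ℝ} (ht : 0 ≤ t) (n : ℕ) :
    P {ω | N t ω = (n : ℝ)} =
      ENNReal.ofReal (Real.exp (-(lam * t)) * (lam * t) ^ n / (n.factorial : ℝ)) := by
  have := hN.law 0 t le_rfl ht n
  simpa [hN.zero _ 0 le_rfl] using this

/-- Right-continuity of a monotone path, in the form used for measurability arguments. -/
lemma exists_rat_lt (hN : IsPoissonProcess P N lam) {s c : ℝ} {ω : Ω} (hs : N s ω < c) {b : ℝ}
    (hb : s < b) : ∃ q : ℚ, s < q ∧ (q : ℝ) < b ∧ N q ω < c := by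
  have h1 : ∀ᶠ u in nhdsWithin s (Set.Ioi s), N u ω < c :=
    ((hN.rightCont ω s).mono Set.Ioi_subset_Ici_self).eventually (eventually_lt_nhds hs)
  have h2 : ∀ᶠ u in nhdsWithin s (Set.Ioi s), u ∈ Set.Ioo s b :=
    Ioo_mem_nhdsGT hb
  obtain ⟨u, hu1, hu2⟩ := (h1.and h2).exists
  obtain ⟨q, hq1, hq2⟩ := exists_rat_btwn hu2.1
  exact ⟨q, hq1, hq2.trans hu2.2, (hN.mono ω hq2.le).trans_lt hu1⟩

/-- Monotone right-continuous paths make the process jointly measurable. -/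
lemma measurable_uncurry (hN : IsPoissonProcess P N lam) :
    Measurable (fun p : Ω × ℝ => N p.2 p.1) := by
  refine measurable_of_Iio fun c => ?_
  have : (fun p : Ω × ℝ => N p.2 p.1) ⁻¹' Set.Iio c =
      ⋃ q : ℚ, {ω | N q ω < c} ×ˢ Set.Iio (q : ℝ) := by
    ext ⟨ω, s⟩
    simp only [Set.mem_preimage, Set.mem_Iio, Set.mem_iUnion, Set.mem_prod, Set.mem_ofPred_eq]
    constructor
    · intro hs
      obtain ⟨q, h1, -, h2⟩ := hN.exists_rat_lt hs (lt_add_one s)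
      exact ⟨q, h2, h1⟩
    · rintro ⟨q, h2, h1⟩
      exact (hN.mono ω h1.le).trans_lt h2
  rw [this]
  exact MeasurableSet.iUnion fun q =>
    (measurableSet_lt (hN.meas q) measurable_const).prod measurableSet_Iio

/-- Two or more jumps in a time interval of length `d` have probability `O(d²)`. -/
lemma prob_two_le (hN : IsPoissonProcess P N lam) [IsProbabilityMeasure P] {s d : ℝ}
    (hs : 0 ≤ s) (hd : 0 ≤ d) :
    P {ω | 2 ≤ N (s + d) ω - N s ω} ≤ ENNReal.ofReal ((lam * d) ^ 2) := by
  have hle : s ≤ s + d := by linarith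
  set X : Ω → ℝ := fun ω => N (s + d) ω - N s ω with hX
  have hXm : Measurable X := (hN.meas _).sub (hN.meas _)
  have h0 := hN.law s (s + d) hs hle 0
  have h1 := hN.law s (s + d) hs hle 1
  simp only [add_sub_cancel_left, Nat.cast_zero, Nat.cast_one, pow_zero, pow_one,
    Nat.factorial_zero, Nat.factorial_one, div_one, mul_one] at h0 h1
  have hm0 : MeasurableSet {ω | X ω = 0} := hXm (measurableSet_singleton 0)
  have hm1 : MeasurableSet {ω | X ω = 1} := hXm (measurableSet_singleton 1)
  have hx : 0 ≤ lam * d := mul_nonneg hN.lam_pos.le hd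
  have hdisj : Disjoint {ω | X ω = 0} {ω | X ω = 1} := by
    rw [Set.disjoint_left]
    intro ω h h'
    simp only [Set.mem_ofPred_eq] at h h'
    linarith
  have hU : P ({ω | X ω = 0} ∪ {ω | X ω = 1}) =
      ENNReal.ofReal (Real.exp (-(lam * d)) * (1 + lam * d)) := by
    rw [measure_union hdisj hm1, h0, h1, ← ENNReal.ofReal_add (by positivity) (by positivity)]
    ring_nf
  have hsub : {ω | 2 ≤ X ω} ⊆ ({ω | X ω = 0} ∪ {ω | X ω = 1})ᶜ := by
    intro ω hω
    simp only [Set.mem_ofPred_eq, Set.mem_compl_iff, Set.mem_union] at hω ⊢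
    rintro (h | h) <;> linarith
  refine (measure_mono hsub).trans ?_
  rw [prob_compl_eq_one_sub (hm0.union hm1), hU, ← ENNReal.ofReal_one,
    ← ENNReal.ofReal_sub _ (by positivity)]
  apply ENNReal.ofReal_le_ofReal
  have := Real.add_one_le_exp (-(lam * d))
  nlinarith

/-- Every path exceeds any given level, almost surely. -/
lemma ae_exists_gt (hN : IsPoissonProcess P N lam) [IsProbabilityMeasure P] (k : ℕ) :
    ∀ᵐ ω ∂P, ∃ n : ℕ, (k : ℝ) < N n ω := by
  have hsub : ∀ n : ℕ, {ω | ¬ ∃ n : ℕ, (k : ℝ) < N n ω} ⊆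
      ⋃ j ∈ Finset.range (k + 1), {ω | N n ω = (j : ℝ)} := by
    intro n ω hω
    simp only [not_exists, not_lt, Set.mem_ofPred_eq] at hω
    obtain ⟨j, hj⟩ := hN.natValued n ω
    have := hω n
    rw [hj] at this
    simp only [Set.mem_iUnion, Finset.mem_range, Set.mem_ofPred_eq]
    exact ⟨j, Nat.lt_succ_of_le (by exact_mod_cast this), hj⟩
  have hb : ∀ n : ℕ, P {ω | ¬ ∃ n : ℕ, (k : ℝ) < N n ω} ≤
      ∑ j ∈ Finset.range (k + 1),
        ENNReal.ofReal (Real.exp (-(lam * n)) * (lam * n) ^ j / (j.factorial : ℝ)) := by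
    intro n
    refine (measure_mono (hsub n)).trans ((measure_biUnion_finset_le _ _).trans ?_)
    exact Finset.sum_le_sum fun j _ => (hN.law_zero (Nat.cast_nonneg n) j).le
  have hlim : Tendsto (fun n : ℕ => ∑ j ∈ Finset.range (k + 1),
        ENNReal.ofReal (Real.exp (-(lam * n)) * (lam * n) ^ j / (j.factorial : ℝ)))
        atTop (nhds 0) := by
    rw [← Finset.sum_const_zero (s := Finset.range (k + 1)) (M := ℝ≥0∞)]
    refine tendsto_finsetSum _ fun j _ => ?_
    rw [← ENNReal.ofReal_zero]
    refine ENNReal.tendsto_ofReal ?_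
    have h1 : Tendsto (fun n : ℕ => lam * (n : ℝ)) atTop atTop :=
      tendsto_natCast_atTop_atTop.const_mul_atTop hN.lam_pos
    have h2 := ((Real.tendsto_pow_mul_exp_neg_atTop_nhds_zero j).comp h1).div_const
      (j.factorial : ℝ)
    simpa [Function.comp_def, mul_comm] using h2
  rw [ae_iff]
  exact le_antisymm (ge_of_tendsto' hlim hb) zero_le

/-- Almost surely no level is skipped: a path that skips `k` before time `T` has, on every
equidistant grid of `[0, T]` with `n` cells, a cell with an increment of at least `2`, and this has
probability at most `n (lam T / n)²`. -/
lemma ae_exists_eq (hN : IsPoissonProcess P N lam) [IsProbabilityMeasure P] (k : ℕ) :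
    ∀ᵐ ω ∂P, ∃ u : ℝ, N u ω = k := by
  have hT : ∀ T : ℕ, P {ω | (k : ℝ) < N T ω ∧ ∀ u, N u ω ≠ k} = 0 := by
    intro T
    have hgrid : ∀ n : ℕ, {ω | (k : ℝ) < N T ω ∧ ∀ u, N u ω ≠ k} ⊆
        ⋃ i ∈ Finset.range (n + 1), {ω | 2 ≤
          N ((i : ℝ) * (T / (n + 1)) + T / (n + 1)) ω - N ((i : ℝ) * (T / (n + 1))) ω} := by
      intro n ω hω
      obtain ⟨h1, h2⟩ := hω
      have hex : ∃ i : ℕ, (k : ℝ) < N ((i : ℝ) * (T / (n + 1))) ω := by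
        refine ⟨n + 1, ?_⟩
        have : ((n + 1 : ℕ) : ℝ) * (T / (n + 1)) = T := by push_cast; field_simp
        rwa [this]
      classical
      have hpos : Nat.find hex ≠ 0 := by
        intro h0
        have := Nat.find_spec hex
        rw [h0] at this
        simp only [Nat.cast_zero, zero_mul, hN.zero ω 0 le_rfl] at this
        exact absurd this (not_lt.2 (Nat.cast_nonneg k))
      obtain ⟨i, hi⟩ := Nat.exists_eq_succ_of_ne_zero hpos
      have hlt : ¬ (k : ℝ) < N ((i : ℝ) * (T / (n + 1))) ω := Nat.find_min hex (by omega)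
      have hgt := Nat.find_spec hex
      rw [hi] at hgt
      have hile : Nat.find hex ≤ n + 1 := by
        apply Nat.find_min'
        have : ((n + 1 : ℕ) : ℝ) * (T / (n + 1)) = T := by push_cast; field_simp
        rwa [this]
      simp only [Set.mem_iUnion, Finset.mem_range, Set.mem_ofPred_eq]
      refine ⟨i, by omega, ?_⟩
      have e : ((i.succ : ℕ) : ℝ) * (T / (n + 1)) = (i : ℝ) * (T / (n + 1)) + T / (n + 1) := by
        push_cast; ring
      rw [e] at hgt
      obtain ⟨a, ha⟩ := hN.natValued ((i : ℝ) * (T / (n + 1)) + T / (n + 1)) ω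
      obtain ⟨b, hb⟩ := hN.natValued ((i : ℝ) * (T / (n + 1))) ω
      have hne := h2 ((i : ℝ) * (T / (n + 1)))
      rw [hb] at hlt hne ⊢
      rw [ha] at hgt ⊢
      norm_cast at hlt hne hgt
      have : b + 2 ≤ a := by omega
      have : (b : ℝ) + 2 ≤ a := by exact_mod_cast this
      linarith
    have hb : ∀ n : ℕ, P {ω | (k : ℝ) < N T ω ∧ ∀ u, N u ω ≠ k} ≤
        ENNReal.ofReal ((lam * T) ^ 2 / ((n : ℝ) + 1)) := by
      intro n
      refine (measure_mono (hgrid n)).trans ((measure_biUnion_finset_le _ _).trans ?_)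
      have hd : (0 : ℝ) ≤ T / (n + 1) := by positivity
      refine (Finset.sum_le_sum fun i _ =>
        hN.prob_two_le (mul_nonneg (Nat.cast_nonneg i) hd) hd).trans ?_
      rw [Finset.sum_const, Finset.card_range, nsmul_eq_mul, ← ENNReal.ofReal_natCast,
        ← ENNReal.ofReal_mul (by positivity)]
      apply ENNReal.ofReal_le_ofReal
      apply le_of_eq
      push_cast
      field_simp
    have hlim : Tendsto (fun n : ℕ => ENNReal.ofReal ((lam * T) ^ 2 / ((n : ℝ) + 1)))
        atTop (nhds 0) := by
      rw [← ENNReal.ofReal_zero]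
      exact ENNReal.tendsto_ofReal (tendsto_const_div_atTop_nhds_zero_nat ((lam * T) ^ 2) |>.comp
        (tendsto_add_atTop_nat 1) |>.congr fun n => by simp)
    exact le_antisymm (ge_of_tendsto' hlim hb) zero_le
  have hall : ∀ᵐ ω ∂P, ∀ T : ℕ, ¬ ((k : ℝ) < N T ω ∧ ∀ u, N u ω ≠ k) := by
    rw [ae_all_iff]
    intro T
    rw [ae_iff]
    simpa using hT T
  filter_upwards [hall, hN.ae_exists_gt k] with ω h1 ⟨n, hn⟩
  by_contra hcon
  push Not at hcon
  exact h1 n ⟨hn, hcon⟩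

end IsPoissonProcess

/-! ### The function `h̃` as a series -/

namespace IsPoissonProcess

variable {Ω : Type*} {m0 : MeasurableSpace Ω} {P : Measure Ω} {N : ℝ → Ω → ℝ} {lam : ℝ}

/-- The expected time spent in each state is `1 / lam`: the state probabilities are, up to the
factor `lam`, the densities of Gamma laws. -/
lemma occupation (hN : IsPoissonProcess P N lam) [IsProbabilityMeasure P] (j : ℕ) :
    (P.prod (volume.restrict (Set.Ioi (0 : ℝ)))) {p | N p.2 p.1 = (j : ℝ)} =
      ENNReal.ofReal (1 / lam) := by
  have hm : MeasurableSet {p : Ω × ℝ | N p.2 p.1 = (j : ℝ)} :=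
    hN.measurable_uncurry (measurableSet_singleton _)
  have hlam := hN.lam_pos
  rw [Measure.prod_apply_symm hm]
  have e1 : ∀ s ∈ Set.Ioi (0 : ℝ),
      P ((fun ω => (ω, s)) ⁻¹' {p : Ω × ℝ | N p.2 p.1 = (j : ℝ)}) =
        ENNReal.ofReal (1 / lam) * gammaPDF (j + 1) lam s := by
    intro s hs
    have hs' : (0 : ℝ) ≤ s := le_of_lt hs
    have := hN.law_zero hs' j
    simp only [Set.preimage_ofPred_eq]
    rw [this, gammaPDF_of_nonneg hs', ← ENNReal.ofReal_mul (by positivity)]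
    congr 1
    rw [Real.Gamma_nat_eq_factorial, add_sub_cancel_right, Real.rpow_natCast,
      show ((j : ℝ) + 1) = ((j + 1 : ℕ) : ℝ) by push_cast; ring, Real.rpow_natCast, mul_pow, pow_succ]
    field_simp
  rw [setLIntegral_congr_fun measurableSet_Ioi e1]
  rw [lintegral_const_mul (f := gammaPDF (j + 1) lam) _
    (measurable_gammaPDFReal _ _).ennreal_ofReal]
  have e2 : ∫⁻ s in Set.Ioi (0 : ℝ), gammaPDF (j + 1) lam s = 1 := by
    rw [← lintegral_gammaPDF_eq_one (a := (j : ℝ) + 1) (by positivity) hlam,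
      ← setLIntegral_congr Ioi_ae_eq_Ici.symm,
      ← lintegral_add_compl (μ := volume) (gammaPDF (j + 1) lam) (measurableSet_Ici (a := (0 : ℝ))),
      Set.compl_Ici, lintegral_gammaPDF_of_nonpos le_rfl, add_zero]
  rw [e2, mul_one]

lemma hasSum_til (hN : IsPoissonProcess P N lam) [IsProbabilityMeasure P] (γ : ℝ)
    {h : ℕ → ℝ} {C : ℝ} (hC : ∀ n, |h n| ≤ C) (x : ℕ) :
    HasSum (fun j : ℕ => γ * h (j + x) * Real.exp (-(j : ℝ)))
      (∫ ω, (∫ s in Set.Ioi (0 : ℝ),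
        γ * lam * h (Nat.floor (N s ω) + x) * Real.exp (-(N s ω))) ∂P) := by
  have hlam := hN.lam_pos
  set μ := P.prod (volume.restrict (Set.Ioi (0 : ℝ))) with hμ
  set f : Ω × ℝ → ℝ := fun p =>
    γ * lam * h (Nat.floor (N p.2 p.1) + x) * Real.exp (-(N p.2 p.1)) with hf
  set E : ℕ → Set (Ω × ℝ) := fun j => {p | N p.2 p.1 = (j : ℝ)} with hE
  have hEm : ∀ j, MeasurableSet (E j) := fun j =>
    hN.measurable_uncurry (measurableSet_singleton _)
  have hEd : Pairwise (Function.onFun Disjoint E) := by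
    intro i j hij
    refine Set.disjoint_left.2 fun p hp hp' => hij ?_
    have : (i : ℝ) = j := (show N p.2 p.1 = i from hp).symm.trans hp'
    exact_mod_cast this
  have hEu : ⋃ j, E j = Set.univ := by
    refine Set.eq_univ_of_forall fun p => ?_
    obtain ⟨n, hn⟩ := hN.natValued p.2 p.1
    exact Set.mem_iUnion.2 ⟨n, hn⟩
  have hEμ : ∀ j, μ (E j) = ENNReal.ofReal (1 / lam) := fun j => hN.occupation j
  have hEr : ∀ j, μ.real (E j) = 1 / lam := fun j => by
    rw [Measure.real, hEμ, ENNReal.toReal_ofReal (by positivity)]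
  have hfE : ∀ j, Set.EqOn f (fun _ => γ * lam * h (j + x) * Real.exp (-(j : ℝ))) (E j) := by
    intro j p hp
    have hp' : N p.2 p.1 = (j : ℝ) := hp
    simp only [hf, hp', Nat.floor_natCast]
  have hfi : ∀ j, IntegrableOn f (E j) μ := fun j =>
    (integrableOn_const (by rw [hEμ]; exact ENNReal.ofReal_ne_top)).congr_fun
      (hfE j).symm (hEm j)
  have hgeom : Summable (fun j : ℕ => Real.exp (-(j : ℝ))) :=
    Real.summable_exp_neg_nat
  have hint : Integrable f μ := by
    rw [← integrableOn_univ, ← hEu]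
    refine integrableOn_iUnion_of_summable_integral_norm hfi ?_
    have hb : Summable (fun j : ℕ => |γ| * C * Real.exp (-(j : ℝ))) := hgeom.mul_left _
    refine Summable.of_nonneg_of_le (fun j => by positivity) (fun j => ?_) hb
    rw [setIntegral_congr_fun (hEm j) (fun p hp => congrArg norm (hfE j hp)), setIntegral_const,
      hEr]
    simp only [norm_mul, Real.norm_eq_abs, smul_eq_mul, Real.abs_exp, abs_of_pos hlam]
    have : |h (j + x)| ≤ C := hC _
    calc 1 / lam * (|γ| * lam * |h (j + x)| * Real.exp (-(j : ℝ)))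
        = |γ| * |h (j + x)| * Real.exp (-(j : ℝ)) := by field_simp
      _ ≤ _ := by gcongr
  have key := hasSum_integral_iUnion hEm hEd (by rw [hEu]; exact hint.integrableOn)
  rw [hEu, setIntegral_univ, integral_prod f hint] at key
  have hterm : (fun j : ℕ => γ * h (j + x) * Real.exp (-(j : ℝ))) =
      fun j => ∫ p in E j, f p ∂μ := by
    funext j
    rw [setIntegral_congr_fun (hEm j) (hfE j), setIntegral_const, hEr, smul_eq_mul]
    field_simp
  rw [hterm]
  exact key

end IsPoissonProcess

/-! ### The threshold `Θ` -/

section Threshold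

variable {Ω : Type*} {m0 : MeasurableSpace Ω} {P : Measure Ω}

/-- With `K = ⌈Θ⌉ - 1`, the expectation of `h(K)` on `{Θ > n}` is the tail from `n` of
`∑ h(k) (e^{-k} - e^{-k-1})`. -/
lemma hasSum_threshold [IsProbabilityMeasure P] {Θ : Ω → ℝ} (hΘ_meas : Measurable Θ)
    (hΘ_law : ∀ x : ℝ, 0 ≤ x → P {ω | x < Θ ω} = ENNReal.ofReal (Real.exp (-x)))
    {h : ℕ → ℝ} (hint : Integrable (fun ω => h (⌈Θ ω⌉₊ - 1)) P) (n : ℕ) :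
    HasSum (fun j : ℕ => Real.exp (-(n : ℝ)) *
        ((1 - Real.exp (-1)) * h (j + n) * Real.exp (-(j : ℝ))))
      (∫ ω in {ω | (n : ℝ) < Θ ω}, h (⌈Θ ω⌉₊ - 1) ∂P) := by
  set E : ℕ → Set Ω := fun j => {ω | ⌈Θ ω⌉₊ = j + n + 1} with hE
  have hEI : ∀ j, E j = {ω | ((j + n : ℕ) : ℝ) < Θ ω} \ {ω | ((j + n + 1 : ℕ) : ℝ) < Θ ω} := by
    intro j
    ext ω
    simp only [hE, Set.mem_ofPred_eq, Set.mem_sdiff, not_lt]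
    rw [Nat.ceil_eq_iff (by omega), add_tsub_cancel_right]
  have hEm : ∀ j, MeasurableSet (E j) := fun j =>
    (Nat.measurable_ceil.comp hΘ_meas) (measurableSet_singleton _)
  have hEd : Pairwise (Function.onFun Disjoint E) := by
    intro i j hij
    refine Set.disjoint_left.2 fun ω hp hp' => hij ?_
    have h1 : ⌈Θ ω⌉₊ = i + n + 1 := hp
    have h2 : ⌈Θ ω⌉₊ = j + n + 1 := hp'
    omega
  have hEu : ⋃ j, E j = {ω | (n : ℝ) < Θ ω} := by
    ext ω
    simp only [hE, Set.mem_iUnion, Set.mem_ofPred_eq]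
    rw [← Nat.lt_ceil]
    constructor
    · rintro ⟨j, hj⟩; omega
    · intro hn; exact ⟨⌈Θ ω⌉₊ - n - 1, by omega⟩
  have hEr : ∀ j, P.real (E j) =
      Real.exp (-(n : ℝ)) * ((1 - Real.exp (-1)) * Real.exp (-(j : ℝ))) := by
    intro j
    rw [hEI, measureReal_sdiff _ (measurableSet_lt measurable_const hΘ_meas), Measure.real,
      Measure.real, hΘ_law _ (Nat.cast_nonneg _), hΘ_law _ (Nat.cast_nonneg _),
      ENNReal.toReal_ofReal (Real.exp_pos _).le, ENNReal.toReal_ofReal (Real.exp_pos _).le]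
    · push_cast
      rw [show -((j : ℝ) + n + 1) = -(n : ℝ) + (-1 + -(j : ℝ)) by ring,
        show -((j : ℝ) + n) = -(n : ℝ) + (-(j : ℝ)) by ring, Real.exp_add, Real.exp_add,
        Real.exp_add]
      ring
    · intro ω hω
      simp only [Set.mem_ofPred_eq] at hω ⊢
      push_cast at hω ⊢
      linarith
  have key := hasSum_integral_iUnion (μ := P) (f := fun ω => h (⌈Θ ω⌉₊ - 1)) hEm hEd
    hint.integrableOn
  rw [hEu] at key
  have hterm : (fun j : ℕ => Real.exp (-(n : ℝ)) *
      ((1 - Real.exp (-1)) * h (j + n) * Real.exp (-(j : ℝ)))) =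
      fun j => ∫ ω in E j, h (⌈Θ ω⌉₊ - 1) ∂P := by
    funext j
    rw [setIntegral_congr_fun (g := fun _ => h (j + n)) (hEm j), setIntegral_const, hEr,
      smul_eq_mul]
    · ring
    · intro ω hω
      have : ⌈Θ ω⌉₊ = j + n + 1 := hω
      simp [this]
  rw [hterm]
  exact key

end Threshold

/-! ### The random time and the enlarged filtration -/

section Enlargement

variable {Ω : Type*} {m0 : MeasurableSpace Ω} {P : Measure Ω} {N : ℝ → Ω → ℝ} {lam : ℝ}

lemma natFil_le (hN : IsPoissonProcess P N lam) (t : ℝ) : natFil N t ≤ m0 :=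
  iSup₂_le fun u _ => (hN.meas u).comap_le

/-- For negative times the process is `0 = N 0`, so `F_∞` contains all of `F_t`. -/
lemma natFil_le_natFilInf (hN : IsPoissonProcess P N lam) (t : ℝ) : natFil N t ≤ natFilInf N := by
  refine iSup₂_le fun u _ => ?_
  rcases le_total 0 u with hu | hu
  · exact le_iSup₂_of_le (f := fun (u : ℝ) (_ : (0 : ℝ) ≤ u) =>
      MeasurableSpace.comap (N u) inferInstance) u hu le_rfl
  · have : N u = N 0 := by
      funext ω
      rw [hN.zero ω u hu, hN.zero ω 0 le_rfl]
    rw [this]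
    exact le_iSup₂_of_le (f := fun (u : ℝ) (_ : (0 : ℝ) ≤ u) =>
      MeasurableSpace.comap (N u) inferInstance) 0 le_rfl le_rfl

lemma measurable_natFil {u t : ℝ} (hut : u ≤ t) : Measurable[natFil N t] (N u) :=
  Measurable.of_comap_le (le_iSup₂_of_le (f := fun (u : ℝ) (_ : u ≤ t) =>
      MeasurableSpace.comap (N u) inferInstance) u hut le_rfl)

/-- Off the exceptional event that the level `Θ` is never reached, `{t < τ} = {N_t < Θ}`. -/
lemma lt_tau_iff (hN : IsPoissonProcess P N lam) {θ : ℝ} {ω : Ω}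
    (hne : ∃ u : ℝ, 0 ≤ u ∧ θ ≤ N u ω) {t : ℝ} (ht : 0 ≤ t) :
    t < sInf {u : ℝ | 0 ≤ u ∧ θ ≤ N u ω} ↔ N t ω < θ := by
  have hbdd : BddBelow {u : ℝ | 0 ≤ u ∧ θ ≤ N u ω} := ⟨0, fun u hu => hu.1⟩
  constructor
  · intro h
    by_contra hcon
    exact absurd (csInf_le hbdd ⟨ht, not_lt.1 hcon⟩) (not_le.2 h)
  · intro h
    obtain ⟨q, hq, -, hq'⟩ := hN.exists_rat_lt h (lt_add_one t)
    refine hq.trans_le (le_csInf hne fun u hu => ?_)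
    by_contra hcon
    exact absurd (hu.2.trans (hN.mono ω (not_le.1 hcon).le)) (not_le.2 hq')

lemma measurable_tau (hN : IsPoissonProcess P N lam) {Θ : Ω → ℝ} (hΘ_meas : Measurable Θ)
    {τ : Ω → ℝ} (hτ : ∀ ω, τ ω = sInf {t : ℝ | 0 ≤ t ∧ Θ ω ≤ N t ω}) (s : ℝ) :
    MeasurableSet {ω | τ ω ≤ s} := by
  have hnn : ∀ ω, 0 ≤ τ ω := fun ω => by
    rw [hτ]
    exact Real.sInf_nonneg fun u hu => hu.1
  rcases lt_or_ge s 0 with hs | hs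
  · convert MeasurableSet.empty
    ext ω
    simpa using hs.trans_le (hnn ω)
  -- if the level is never reached, the infimum of the empty set is `0`, so `τ ≤ s`
  have : {ω | τ ω ≤ s} = {ω | Θ ω ≤ N s ω} ∪ ⋂ n : ℕ, {ω | N n ω < Θ ω} := by
    ext ω
    simp only [Set.mem_ofPred_eq, Set.mem_union, Set.mem_iInter]
    by_cases hne : ∃ u : ℝ, 0 ≤ u ∧ Θ ω ≤ N u ω
    · have h1 := (lt_tau_iff hN hne hs).not
      rw [← hτ, not_lt, not_lt] at h1
      have h2 : ¬ ∀ n : ℕ, N n ω < Θ ω := by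
        obtain ⟨u, -, hu⟩ := hne
        obtain ⟨n, hn⟩ := exists_nat_ge u
        exact fun h => absurd (hu.trans (hN.mono ω hn)) (not_le.2 (h n))
      rw [h1]
      simp [h2]
    · have h0 : τ ω = 0 := by
        rw [hτ, show {t : ℝ | 0 ≤ t ∧ Θ ω ≤ N t ω} = ∅ from
          Set.eq_empty_of_forall_notMem fun u hu => hne ⟨u, hu⟩, Real.sInf_empty]
      push Not at hne
      exact iff_of_true (h0.le.trans hs) (Or.inr fun n => hne n (Nat.cast_nonneg n))
  rw [this]
  exact (measurableSet_le hΘ_meas (hN.meas s)).union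
    (MeasurableSet.iInter fun n => measurableSet_lt (hN.meas n) hΘ_meas)

lemma progEnl_le (hN : IsPoissonProcess P N lam) {τ : Ω → ℝ}
    (hτm : ∀ s, MeasurableSet {ω | τ ω ≤ s}) (t : ℝ) : progEnl N τ t ≤ m0 := by
  refine sup_le (natFil_le hN t) (MeasurableSpace.generateFrom_le ?_)
  rintro A ⟨s, -, rfl⟩
  exact hτm s

lemma measurableSet_progEnl_tau {τ : Ω → ℝ} {s t : ℝ} (hst : s ≤ t) :
    MeasurableSet[progEnl N τ t] {ω | τ ω ≤ s} :=
  (le_sup_right : _ ≤ progEnl N τ t) _ (MeasurableSpace.measurableSet_generateFrom ⟨s, hst, rfl⟩)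

/-- Before `τ`, the enlarged σ-algebra carries no more information than `F_t`. -/
lemma progEnl_trace {τ : Ω → ℝ} {t : ℝ} {A : Set Ω} (hA : MeasurableSet[progEnl N τ t] A) :
    ∃ B, MeasurableSet[natFil N t] B ∧ A ∩ {ω | t < τ ω} = B ∩ {ω | t < τ ω} := by
  have key : (progEnl N τ t).comap (Subtype.val : {ω | t < τ ω} → Ω) ≤
      (natFil N t).comap Subtype.val := by
    rw [progEnl, MeasurableSpace.comap_sup, MeasurableSpace.comap_generateFrom]
    refine sup_le le_rfl (MeasurableSpace.generateFrom_le ?_)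
    rintro _ ⟨_, ⟨s, hs, rfl⟩, rfl⟩
    convert MeasurableSet.empty
    ext ω
    have : t < τ ω := ω.2
    simpa using hs.trans_lt this
  obtain ⟨B, hB, hBA⟩ := key _ ⟨A, hA, rfl⟩
  refine ⟨B, hB, ?_⟩
  rw [Set.inter_comm A, Set.inter_comm B]
  exact (Subtype.preimage_val_eq_preimage_val_iff _ _ _).1 hBA.symm

/-- The pre-`τ` value of the process is known at time `t` on `{τ ≤ t}`; here `{N_{τ-} > c}` is
tested at rational times before `τ`. -/
lemma measurable_Nminus_progEnl (hN : IsPoissonProcess P N lam) {τ : Ω → ℝ} {Nminus : ℝ → Ω → ℝ}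
    (hNminus : ∀ (s : ℝ) (ω : Ω), Nminus s ω = sSup ((fun u => N u ω) '' Set.Iio s)) {t : ℝ}
    (c : ℝ) : MeasurableSet[progEnl N τ t] ({ω | c < Nminus (τ ω) ω} ∩ {ω | τ ω ≤ t}) := by
  have hrep : {ω | c < Nminus (τ ω) ω} ∩ {ω | τ ω ≤ t} =
      ⋃ (q : ℚ) (_ : (q : ℝ) ≤ t), ({ω | τ ω ≤ q}ᶜ ∩ {ω | c < N q ω}) ∩ {ω | τ ω ≤ t} := by
    ext ω
    simp only [Set.mem_inter_iff, Set.mem_ofPred_eq, Set.mem_iUnion, Set.mem_compl_iff, not_le,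
      exists_prop, hNminus]
    have hb : BddAbove ((fun u => N u ω) '' Set.Iio (τ ω)) := by
      refine ⟨N (τ ω) ω, ?_⟩
      rintro _ ⟨u, hu, rfl⟩
      exact hN.mono ω (le_of_lt hu)
    rw [lt_csSup_iff hb (Set.nonempty_Iio.image _)]
    constructor
    · rintro ⟨⟨_, ⟨u, hu, rfl⟩, hc⟩, hle⟩
      obtain ⟨q, hq1, hq2⟩ := exists_rat_btwn (show u < τ ω from hu)
      exact ⟨q, hq2.le.trans hle, ⟨hq2, lt_of_lt_of_le hc (hN.mono ω hq1.le)⟩, hle⟩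
    · rintro ⟨q, -, ⟨hq2, hc⟩, hle⟩
      exact ⟨⟨_, ⟨q, hq2, rfl⟩, hc⟩, hle⟩
  rw [hrep]
  refine MeasurableSet.iUnion fun q => MeasurableSet.iUnion fun hq => ?_
  refine ((measurableSet_progEnl_tau hq).compl.inter ?_).inter (measurableSet_progEnl_tau le_rfl)
  exact (le_sup_left : natFil N t ≤ progEnl N τ t) _ ((measurable_natFil hq) measurableSet_Ioi)

/-- If the path takes every value in `ℕ`, it is at `⌈Θ⌉ - 1` right before it reaches `Θ > 0`. -/
lemma floor_Nminus (hN : IsPoissonProcess P N lam) {θ : ℝ} (hθ : 0 < θ) {ω : Ω}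
    (hall : ∀ k : ℕ, ∃ u : ℝ, N u ω = k) :
    ⌊sSup ((fun u => N u ω) '' Set.Iio (sInf {u : ℝ | 0 ≤ u ∧ θ ≤ N u ω}))⌋₊ = ⌈θ⌉₊ - 1 := by
  have hc : 0 < ⌈θ⌉₊ := Nat.ceil_pos.2 hθ
  set τ := sInf {u : ℝ | 0 ≤ u ∧ θ ≤ N u ω} with hτ
  have hex : ∃ u : ℝ, 0 ≤ u ∧ θ ≤ N u ω := by
    obtain ⟨u, hu⟩ := hall ⌈θ⌉₊
    exact ⟨max u 0, le_max_right _ _,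
      (Nat.le_ceil θ).trans (hu.ge.trans (hN.mono ω (le_max_left _ _)))⟩
  have hle : ∀ u < τ, N u ω ≤ ((⌈θ⌉₊ - 1 : ℕ) : ℝ) := by
    intro u hu
    rcases le_or_gt 0 u with h0 | h0
    · have h1 := (lt_tau_iff hN hex h0).1 hu
      obtain ⟨n, hn⟩ := hN.natValued u ω
      rw [hn] at h1 ⊢
      have : n < ⌈θ⌉₊ := Nat.lt_ceil.2 h1
      exact_mod_cast (by omega : n ≤ ⌈θ⌉₊ - 1)
    · rw [hN.zero ω u h0.le]
      positivity
  obtain ⟨u, hu⟩ := hall (⌈θ⌉₊ - 1)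
  have hlt : N u ω < θ := by
    rw [hu]
    exact Nat.lt_ceil.1 (by omega)
  have huτ : u < τ := by
    rcases le_or_gt 0 u with h0 | h0
    · exact (lt_tau_iff hN hex h0).2 hlt
    · exact h0.trans_le (Real.sInf_nonneg fun u hu => hu.1)
  have : sSup ((fun u => N u ω) '' Set.Iio τ) = ((⌈θ⌉₊ - 1 : ℕ) : ℝ) := by
    apply IsGreatest.csSup_eq
    refine ⟨⟨u, huτ, hu⟩, ?_⟩
    rintro _ ⟨v, hv, rfl⟩
    exact hle v hv
  rw [this, Nat.floor_natCast]

end Enlargement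

/-! ### The identity before `τ` -/

section Key

variable {Ω : Type*} {m0 : MeasurableSpace Ω} {P : Measure Ω} {N : ℝ → Ω → ℝ} {lam : ℝ}

/-- Independence of `Θ` and `D`, for functions of `Θ`. -/
lemma setIntegral_indep [IsProbabilityMeasure P] {Θ : Ω → ℝ} (hΘ_meas : Measurable Θ)
    {m : MeasurableSpace Ω} (hm : m ≤ m0)
    (hind : Indep (MeasurableSpace.comap Θ inferInstance) m P) {F : ℝ → ℝ} (hF : Measurable F)
    (hint : Integrable (fun ω => F (Θ ω)) P) {D : Set Ω} (hD : MeasurableSet[m] D) :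
    ∫ ω in D, F (Θ ω) ∂P = P.real D * ∫ ω, F (Θ ω) ∂P := by
  have hFm : StronglyMeasurable[MeasurableSpace.comap Θ inferInstance] (fun ω => F (Θ ω)) :=
    (hF.comp (comap_measurable Θ)).stronglyMeasurable
  have h1 := condExp_indep_eq hΘ_meas.comap_le hm hFm hind
  rw [← setIntegral_condExp hm hint hD, setIntegral_congr_ae (hm _ hD) (h1.mono fun ω h _ => h),
    setIntegral_const, smul_eq_mul]

/-- The defining property of the conditional expectation on the part of `G_t` before `τ`. Given
`N_t = n`, the event `{n < Θ}` and `h(⌈Θ⌉ - 1)` are independent of `F_t`, and the weight `e^{-n}`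
of `{n < Θ}` is exactly the factor by which `h̃(n)` and the integral of `h(⌈Θ⌉ - 1)` differ. -/
lemma setIntegral_pre_tau [IsProbabilityMeasure P] (hN : IsPoissonProcess P N lam)
    {Θ : Ω → ℝ} (hΘ_meas : Measurable Θ)
    (hΘ_law : ∀ x : ℝ, 0 ≤ x → P {ω | x < Θ ω} = ENNReal.ofReal (Real.exp (-x)))
    (hΘ_indep : Indep (MeasurableSpace.comap Θ inferInstance) (natFilInf N) P)
    {h til : ℕ → ℝ} {C : ℝ} (hC : ∀ n, |h n| ≤ C) (htilC : ∀ n, |til n| ≤ C)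
    (htil : ∀ n : ℕ, ∫ ω in {ω | (n : ℝ) < Θ ω}, h (⌈Θ ω⌉₊ - 1) ∂P = Real.exp (-(n : ℝ)) * til n)
    (t : ℝ) {B : Set Ω} (hB : MeasurableSet[natFil N t] B) :
    ∫ ω in B ∩ {ω | N t ω < Θ ω}, (h (⌈Θ ω⌉₊ - 1) - til ⌊N t ω⌋₊) ∂P = 0 := by
  have hFle := natFil_le hN t
  have hind : Indep (MeasurableSpace.comap Θ inferInstance) (natFil N t) P :=
    indep_of_indep_of_le_right hΘ_indep (natFil_le_natFilInf hN t)
  have hhm : Measurable (fun x : ℝ => h (⌈x⌉₊ - 1)) :=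
    (measurable_of_countable fun n : ℕ => h (n - 1)).comp Nat.measurable_ceil
  have hhi : Integrable (fun ω => h (⌈Θ ω⌉₊ - 1)) P :=
    Integrable.of_bound (hhm.comp hΘ_meas).aestronglyMeasurable C
      (ae_of_all _ fun ω => hC _)
  have hti : Integrable (fun ω => til ⌊N t ω⌋₊) P :=
    Integrable.of_bound ((measurable_of_countable til).comp
      (Nat.measurable_floor.comp (hN.meas t))).aestronglyMeasurable C
      (ae_of_all _ fun ω => htilC _)
  set D : ℕ → Set Ω := fun n => B ∩ {ω | N t ω = n} with hD
  have hDm : ∀ n, MeasurableSet[natFil N t] (D n) := fun n =>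
    hB.inter ((measurable_natFil le_rfl) (measurableSet_singleton _))
  have hΘn : ∀ n : ℕ, MeasurableSet {ω | (n : ℝ) < Θ ω} := fun n =>
    measurableSet_lt measurable_const hΘ_meas
  have hunion : B ∩ {ω | N t ω < Θ ω} = ⋃ n : ℕ, D n ∩ {ω | (n : ℝ) < Θ ω} := by
    ext ω
    simp only [hD, Set.mem_inter_iff, Set.mem_ofPred_eq, Set.mem_iUnion]
    constructor
    · rintro ⟨h1, h2⟩
      obtain ⟨n, hn⟩ := hN.natValued t ω
      exact ⟨n, ⟨h1, hn⟩, hn ▸ h2⟩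
    · rintro ⟨n, ⟨h1, hn⟩, h2⟩
      exact ⟨h1, hn ▸ h2⟩
  have hdisj : Pairwise (Function.onFun Disjoint fun n : ℕ => D n ∩ {ω | (n : ℝ) < Θ ω}) := by
    intro i j hij
    refine Set.disjoint_left.2 fun ω h1 h2 => hij ?_
    have : (i : ℝ) = j := (show N t ω = i from h1.1.2).symm.trans h2.1.2
    exact_mod_cast this
  have hdi : Integrable (fun ω => h (⌈Θ ω⌉₊ - 1) - til ⌊N t ω⌋₊) P := hhi.sub hti
  rw [hunion, integral_iUnion (fun n => (hFle _ (hDm n)).inter (hΘn n)) hdisj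
    hdi.integrableOn]
  refine (tsum_congr fun n => ?_).trans tsum_zero
  set F : ℝ → ℝ := Set.indicator (Set.Ioi (n : ℝ)) (fun x => h (⌈x⌉₊ - 1) - til n) with hF
  have hFm : Measurable F := (hhm.sub_const _).indicator measurableSet_Ioi
  have hFΘ : (fun ω => F (Θ ω)) =
      Set.indicator {ω | (n : ℝ) < Θ ω} (fun ω => h (⌈Θ ω⌉₊ - 1) - til n) := by
    funext ω
    simp [hF, Set.indicator_apply]
  have hFi : Integrable (fun ω => F (Θ ω)) P := by
    rw [hFΘ]
    exact (hhi.sub (integrable_const _)).indicator (hΘn n)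
  have hF0 : ∫ ω, F (Θ ω) ∂P = 0 := by
    rw [hFΘ, integral_indicator (hΘn n), integral_sub hhi.integrableOn (integrable_const _), htil,
      setIntegral_const, Measure.real, hΘ_law _ (Nat.cast_nonneg n),
      ENNReal.toReal_ofReal (Real.exp_pos _).le, smul_eq_mul, sub_self]
  calc ∫ ω in D n ∩ {ω | (n : ℝ) < Θ ω}, (h (⌈Θ ω⌉₊ - 1) - til ⌊N t ω⌋₊) ∂P
      = ∫ ω in D n ∩ {ω | (n : ℝ) < Θ ω}, (h (⌈Θ ω⌉₊ - 1) - til n) ∂P := by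
        refine setIntegral_congr_fun ((hFle _ (hDm n)).inter (hΘn n)) fun ω hω => ?_
        have : N t ω = n := hω.1.2
        simp only [this, Nat.floor_natCast]
    _ = ∫ ω in D n, F (Θ ω) ∂P := by
        rw [hFΘ, setIntegral_indicator (hΘn n)]
    _ = 0 := by
        rw [setIntegral_indep hΘ_meas hFle hind hFm hFi (hDm n), hF0, mul_zero]

end Key

/-- For `τ = inf {t ≥ 0 : N_t ≥ Θ}` with `Θ` unit exponential independent of `F_∞`,
`γ = 1 - e⁻¹` and `h̃` as above, for every `t ≥ 0`:
`E[h(N_{τ-}) | G_t] = 1_{τ ≤ t} h(N_{τ-}) + 1_{τ > t} h̃(N_t)` a.s. -/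
theorem cox_poisson_conditional_expectation
    {Ω : Type*} {m0 : MeasurableSpace Ω} (P : Measure Ω) [IsProbabilityMeasure P]
    (N : ℝ → Ω → ℝ) (lam : ℝ) (hN : IsPoissonProcess P N lam)
    (Θ : Ω → ℝ) (hΘ_meas : Measurable Θ)
    (hΘ_law : ∀ x : ℝ, 0 ≤ x → P {ω | x < Θ ω} = ENNReal.ofReal (Real.exp (-x)))
    (hΘ_indep : Indep (MeasurableSpace.comap Θ inferInstance) (natFilInf N) P)
    (τ : Ω → ℝ) (hτ : ∀ ω, τ ω = sInf {t : ℝ | 0 ≤ t ∧ Θ ω ≤ N t ω})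
    (γ : ℝ) (hγ : γ = 1 - Real.exp (-1))
    (h : ℕ → ℝ) (hh_bdd : ∃ C : ℝ, ∀ n : ℕ, |h n| ≤ C)
    (til : ℕ → ℝ)
    (htil : ∀ x : ℕ, til x =
      ∫ ω, (∫ s in Set.Ioi (0 : ℝ),
        γ * lam * h (Nat.floor (N s ω) + x) * Real.exp (-(N s ω))) ∂P)
    (Nminus : ℝ → Ω → ℝ)
    (hNminus : ∀ (s : ℝ) (ω : Ω), Nminus s ω = sSup ((fun u => N u ω) '' Set.Iio s)) :
    ∀ t : ℝ, 0 ≤ t →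
      P[(fun ω => h (Nat.floor (Nminus (τ ω) ω))) | progEnl N τ t]
        =ᵐ[P] fun ω =>
          Set.indicator {ω' | τ ω' ≤ t} (fun ω' => h (Nat.floor (Nminus (τ ω') ω'))) ω
          + Set.indicator {ω' | t < τ ω'} (fun ω' => til (Nat.floor (N t ω'))) ω := by
  intro t ht
  obtain ⟨C, hC⟩ := hh_bdd
  have hτm := measurable_tau hN hΘ_meas hτ
  have hGle : progEnl N τ t ≤ m0 := progEnl_le hN hτm t
  set H : Ω → ℝ := fun ω => h (Nat.floor (Nminus (τ ω) ω)) with hH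
  set K : Ω → ℝ := fun ω => h (⌈Θ ω⌉₊ - 1) with hK
  have hKi : Integrable K P :=
    Integrable.of_bound ((measurable_of_countable fun n : ℕ => h (n - 1)).comp
      (Nat.measurable_ceil.comp hΘ_meas)).aestronglyMeasurable C (ae_of_all _ fun ω => hC _)
  have hΘpos : ∀ᵐ ω ∂P, 0 < Θ ω := by
    refine (mem_ae_iff_prob_eq_one (measurableSet_lt measurable_const hΘ_meas)).2 ?_
    rw [hΘ_law 0 le_rfl]
    simp
  have hlevels : ∀ᵐ ω ∂P, ∀ k : ℕ, ∃ u : ℝ, N u ω = k := ae_all_iff.2 hN.ae_exists_eq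
  have hHK : H =ᵐ[P] K := by
    filter_upwards [hΘpos, hlevels] with ω h1 h2
    simp only [hH, hK]
    rw [hNminus, hτ, floor_Nminus hN h1 h2]
  have hHi : Integrable H P := hKi.congr hHK.symm
  have hlt : ∀ᵐ ω ∂P, (t < τ ω ↔ N t ω < Θ ω) := by
    filter_upwards [hlevels] with ω h2
    obtain ⟨u, hu⟩ := h2 ⌈Θ ω⌉₊
    rw [hτ]
    exact lt_tau_iff hN ⟨max u 0, le_max_right _ _,
      (Nat.le_ceil _).trans (hu.ge.trans (hN.mono ω (le_max_left _ _)))⟩ ht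
  have htilK : ∀ n : ℕ, ∫ ω in {ω | (n : ℝ) < Θ ω}, K ω ∂P = Real.exp (-(n : ℝ)) * til n := by
    intro n
    have h1 := hasSum_threshold hΘ_meas hΘ_law hKi n
    have h2 := (hN.hasSum_til γ hC n).mul_left (Real.exp (-(n : ℝ)))
    rw [← htil, hγ] at h2
    exact h1.unique h2
  have htilC : ∀ n, |til n| ≤ C := by
    intro n
    have h1 := norm_setIntegral_le_of_norm_le_const (μ := P) (s := {ω | (n : ℝ) < Θ ω}) (f := K)
      (C := C) (measure_lt_top _ _) (fun ω _ => hC _)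
    rw [htilK, Measure.real, hΘ_law _ (Nat.cast_nonneg n),
      ENNReal.toReal_ofReal (Real.exp_pos _).le, norm_mul, Real.norm_eq_abs, Real.abs_exp,
      Real.norm_eq_abs, mul_comm C] at h1
    exact le_of_mul_le_mul_left h1 (Real.exp_pos _)
  have hTm : MeasurableSet[progEnl N τ t] {ω | τ ω ≤ t} := measurableSet_progEnl_tau le_rfl
  have hTcompl : {ω | t < τ ω} = {ω | τ ω ≤ t}ᶜ := by ext ω; simp
  have hTm' : MeasurableSet[progEnl N τ t] {ω | t < τ ω} := hTcompl ▸ hTm.compl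
  have hNm : Measurable[progEnl N τ t] (N t) :=
    (measurable_natFil le_rfl).mono le_sup_left le_rfl
  have htilm : Measurable[progEnl N τ t] (fun ω => til ⌊N t ω⌋₊) :=
    (measurable_of_countable til).comp (Nat.measurable_floor.comp hNm)
  -- cutting `N_{τ-}` off to `0` after `t` gives a `G_t`-measurable variable
  have hcut : Measurable[progEnl N τ t]
      (Set.indicator {ω | τ ω ≤ t} fun ω => Nminus (τ ω) ω) := by
    refine measurable_of_Ioi fun c => ?_
    have hS := measurable_Nminus_progEnl hN hNminus (τ := τ) (t := t) c
    by_cases hc : c < 0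
    · convert hS.union hTm.compl using 1
      ext ω
      by_cases hω : τ ω ≤ t <;> simp [hω, hc]
    · convert hS using 1
      ext ω
      by_cases hω : τ ω ≤ t <;> simp [hω, not_lt.1 hc]
  have hHm : Measurable[progEnl N τ t] (Set.indicator {ω | τ ω ≤ t} H) := by
    have : Set.indicator {ω | τ ω ≤ t} H = Set.indicator {ω | τ ω ≤ t} (fun ω =>
        h ⌊Set.indicator {ω | τ ω ≤ t} (fun ω => Nminus (τ ω) ω) ω⌋₊) := by
      refine Set.indicator_congr fun ω hω => ?_
      simp only [hH]
      rw [Set.indicator_of_mem hω]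
    rw [this]
    exact ((measurable_of_countable h).comp (Nat.measurable_floor.comp hcut)).indicator hTm
  have hgm : Measurable[progEnl N τ t] (fun ω => Set.indicator {ω | τ ω ≤ t} H ω +
      Set.indicator {ω | t < τ ω} (fun ω => til ⌊N t ω⌋₊) ω) :=
    hHm.add (htilm.indicator hTm')
  have hti : Integrable (fun ω => til ⌊N t ω⌋₊) P :=
    Integrable.of_bound (htilm.mono hGle le_rfl).aestronglyMeasurable C
      (ae_of_all _ fun ω => htilC _)
  have hgi : Integrable (fun ω => Set.indicator {ω | τ ω ≤ t} H ω +
      Set.indicator {ω | t < τ ω} (fun ω => til ⌊N t ω⌋₊) ω) P :=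
    (hHi.indicator (hGle _ hTm)).add (hti.indicator (hGle _ hTm'))
  refine (ae_eq_condExp_of_forall_setIntegral_eq hGle hHi (fun _ _ _ => hgi.integrableOn)
    (fun A hA _ => ?_) hgm.stronglyMeasurable.aestronglyMeasurable).symm
  rw [eq_comm, ← sub_eq_zero, ← integral_sub hHi.integrableOn hgi.integrableOn]
  have hdiff : (fun ω => H ω - (Set.indicator {ω | τ ω ≤ t} H ω +
      Set.indicator {ω | t < τ ω} (fun ω => til ⌊N t ω⌋₊) ω)) =
      Set.indicator {ω | t < τ ω} (fun ω => H ω - til ⌊N t ω⌋₊) := by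
    funext ω
    by_cases hω : τ ω ≤ t
    · simp [hω, not_lt.2 hω]
    · simp [hω, not_le.1 hω]
  rw [hdiff, setIntegral_indicator (hGle _ hTm')]
  obtain ⟨B, hB, hAB⟩ := progEnl_trace hA
  have hset : (B ∩ {ω | t < τ ω} : Set Ω) =ᵐ[P] (B ∩ {ω | N t ω < Θ ω} : Set Ω) := by
    filter_upwards [hlt] with ω hω
    exact propext (and_congr_right fun _ => hω)
  rw [hAB, setIntegral_congr_set hset]
  refine Eq.trans (integral_congr_ae (ae_restrict_of_ae ?_))
    (setIntegral_pre_tau hN hΘ_meas hΘ_law hΘ_indep hC htilC htilK t hB)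
  filter_upwards [hHK] with ω hω
  rw [hω]
end
end

section
/- Let Θ be a random variable with the unit exponential distribution, independent of F_∞ := σ(N_s : s ≥ 0), let τ := inf{t ≥ 0 : N_t ≥ Θ}, let γ := 1 − e^{−1}, and for a bounded Borel function h : ℕ → ℝ define h̃(x) := E[ ∫_0^∞ γ λ h(N_s + x) e^{−N_s} ds ] for x ∈ ℕ. Set Y_t := 1_{τ ≤ t} · h(N_{τ−}) + 1_{τ > t} · h̃(N_t) (a version of E[h(N_{τ−}) | G_t]). Then almost surely, for all t ≥ 0: Y_t = h̃(0) + 1_{τ ≤ t} · ( h(N_{τ−}) − h̃(N_{τ−} + 1) ) − ∫_0^{t ∧ τ} γ λ ( h(N_{s−}) − h̃(N_{s−} + 1) ) ds + ∫_{(0, t ∧ τ]} ( h̃(N_{s−} + 1) − h̃(N_{s−}) ) dN_s − ∫_0^{t ∧ τ} λ ( h̃(N_{s−} + 1) − h̃(N_{s−}) ) ds, where ∫_{(0, t ∧ τ]} (·) dN_s denotes the pathwise Lebesgue–Stieltjes integral with respect to the nondecreasing right-continuous path s ↦ N_s(ω) (i.e., the sum of the integrand's values at the jump times of N in (0, t ∧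 τ]). This is the predictable representation of Y with respect to the compensated martingales M^τ_t = 1_{τ ≤ t} − γλ(t ∧ τ) and M_t = N_t − λt. -/
/-!
The identity is pathwise once two facts are available.

* The function `til` satisfies `til x = γ * h x + (1 - γ) * til (x + 1)`. Indeed the process spends
  expected time `1 / lam` in every state (`poisson_occupation`, a Gamma integral and Fubini), so
  `til x = γ * ∑ n, h (n + x) * exp (-n)` (`til_eq_tsum`), and splitting off the first term of the
  series gives the recursion, as `1 - γ = exp (-1)`. The recursion makes the integrands of the two
  `ds`-integrals opposite to each other, so these integrals cancel.

* Almost surely the path is unbounded and has only unit jumps (`poisson_ae_unbounded`,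
  `poisson_ae_simple`). With unit jumps the integral `dN` telescopes to
  `til (N (t ∧ τ)) - til 0` (`stieltjes_telescope`). This settles the case `t < τ`. If `τ ≤ t`, the
  path crosses the level `Θ > 0` at time `τ` by a jump, hence `N τ = N (τ-) + 1`, and the term
  `til (N (τ-) + 1)` cancels against `til (N τ)`.
-/

open MeasureTheory ProbabilityTheory Filter Set
open scoped ENNReal

noncomputable section

/-- The Lebesgue–Stieltjes measure induced by a nondecreasing right-continuous
function. -/
def stieltjesMeasureOf (f : ℝ → ℝ) (hmono : Monotone f)
    (hrc : ∀ x : ℝ, ContinuousWithinAt f (Set.Ici x) x) : Measure ℝ :=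
  StieltjesFunction.measure ⟨f, hmono, hrc⟩

/-! ### Integer-valued càdlàg paths -/

/-- For an integer-valued monotone path the supremum defining the left limit is attained. -/
lemma exists_sSup_eq {f : ℝ → ℝ} (hmono : Monotone f) (hnat : ∀ t, ∃ n : ℕ, f t = n) (s : ℝ) :
    ∃ u < s, sSup (f '' Iio s) = f u := by
  have hne : (f '' Iio s).Nonempty := ⟨f (s - 1), s - 1, by simp, rfl⟩
  have hbdd : BddAbove (f '' Iio s) := ⟨f s, by rintro _ ⟨v, hv, rfl⟩; exact hmono (le_of_lt hv)⟩
  obtain ⟨_, ⟨u, hu, rfl⟩, hlt⟩ := exists_lt_of_lt_csSup hne (sub_one_lt (sSup (f '' Iio s)))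
  refine ⟨u, hu, le_antisymm (csSup_le hne ?_) (le_csSup hbdd ⟨u, hu, rfl⟩)⟩
  rintro _ ⟨v, hv, rfl⟩
  have hle : f v ≤ sSup (f '' Iio s) := le_csSup hbdd ⟨v, hv, rfl⟩
  have hlt' : f v < f u + 1 := by linarith
  obtain ⟨a, ha⟩ := hnat v
  obtain ⟨b, hb⟩ := hnat u
  rw [ha, hb] at hlt' ⊢
  exact_mod_cast Nat.lt_succ_iff.mp (by exact_mod_cast hlt')

/-- The first time `σ` at which a monotone right-continuous path reaches a level `c > 0` that it
does reach: the level is attained at `σ` and not before. -/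
lemma hitting_time {f : ℝ → ℝ} (hmono : Monotone f)
    (hrc : ∀ x : ℝ, ContinuousWithinAt f (Ici x) x) (hzero : ∀ t ≤ 0, f t = 0)
    {c T : ℝ} (hc : 0 < c) (hT : c ≤ f T) :
    let σ := sInf {t : ℝ | 0 ≤ t ∧ c ≤ f t}
    0 < σ ∧ σ ≤ T ∧ c ≤ f σ ∧ ∀ u < σ, f u < c := by
  intro σ
  have hT0 : 0 ≤ T := by
    by_contra! hlt
    have := hzero T hlt.le
    linarith
  have hbdd : BddBelow {t : ℝ | 0 ≤ t ∧ c ≤ f t} := ⟨0, fun t ht => ht.1⟩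
  have hne : {t : ℝ | 0 ≤ t ∧ c ≤ f t}.Nonempty := ⟨T, hT0, hT⟩
  have hbefore : ∀ u < σ, f u < c := by
    intro u hu
    by_contra! hle
    have hu0 : 0 ≤ u := by
      by_contra! hlt
      have := hzero u hlt.le
      linarith
    exact absurd (csInf_le hbdd ⟨hu0, hle⟩) (not_le.mpr hu)
  have hafter : ∀ u, σ < u → c ≤ f u := by
    intro u hu
    obtain ⟨v, hv, hvu⟩ := exists_lt_of_csInf_lt hne hu
    exact hv.2.trans (hmono hvu.le)
  have hσ : c ≤ f σ := by
    have ht : Tendsto f (nhdsWithin σ (Ioi σ)) (nhds (f σ)) :=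
      (hrc σ).mono_left (nhdsWithin_mono _ Ioi_subset_Ici_self)
    exact ge_of_tendsto ht (eventually_nhdsWithin_of_forall hafter)
  refine ⟨?_, csInf_le hbdd ⟨hT0, hT⟩, hσ, hbefore⟩
  by_contra! hle
  have := hzero σ hle
  linarith

/-- Telescoping for a counting path with unit jumps: integrating the increments of `g` against the
Stieltjes measure of the path gives the total increment of `g`. The induction is on the number of
jumps; the last jump time carries the whole mass of the path's last increment. -/
lemma stieltjes_telescope {f : ℝ → ℝ} (hmono : Monotone f)
    (hrc : ∀ x : ℝ, ContinuousWithinAt f (Ici x) x) (hzero : ∀ t ≤ 0, f t = 0)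
    (hnat : ∀ t, ∃ n : ℕ, f t = n) (hjump : ∀ s, f s ≤ sSup (f '' Iio s) + 1) (g : ℕ → ℝ)
    (n : ℕ) : ∀ T : ℝ, 0 ≤ T → f T = n →
    IntegrableOn (fun s => g (⌊sSup (f '' Iio s)⌋₊ + 1) - g ⌊sSup (f '' Iio s)⌋₊) (Ioc 0 T)
      (stieltjesMeasureOf f hmono hrc) ∧
    ∫ s in Ioc 0 T, (g (⌊sSup (f '' Iio s)⌋₊ + 1) - g ⌊sSup (f '' Iio s)⌋₊)
      ∂(stieltjesMeasureOf f hmono hrc) = g n - g 0 := by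
  set μ := stieltjesMeasureOf f hmono hrc with hμ
  set G : ℝ → ℝ := fun s => g (⌊sSup (f '' Iio s)⌋₊ + 1) - g ⌊sSup (f '' Iio s)⌋₊ with hG
  have hIoc : ∀ a b, μ (Ioc a b) = ENNReal.ofReal (f b - f a) := fun a b =>
    StieltjesFunction.measure_Ioc _ a b
  have hsing : ∀ a, μ {a} = ENNReal.ofReal (f a - sSup (f '' Iio a)) := fun a => by
    rw [← hmono.leftLim_eq_sSup]
    exact StieltjesFunction.measure_singleton _ a
  induction n with
  | zero =>
    intro T hT hfT
    have h0 : μ (Ioc 0 T) = 0 := by rw [hIoc, hfT, hzero 0 le_rfl]; simp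
    have hr : μ.restrict (Ioc 0 T) = 0 := Measure.restrict_eq_zero.mpr h0
    refine ⟨?_, ?_⟩
    · rw [IntegrableOn, hr]; exact integrable_zero_measure
    · rw [hr]; simp
  | succ n ih =>
    intro T hT hfT
    have hc : (0 : ℝ) < ((n + 1 : ℕ) : ℝ) := by positivity
    obtain ⟨hσ0, hσT, hσ, hbefore⟩ := hitting_time hmono hrc hzero hc hfT.ge
    set σ := sInf {t : ℝ | 0 ≤ t ∧ ((n + 1 : ℕ) : ℝ) ≤ f t}
    have hfσ : f σ = ((n + 1 : ℕ) : ℝ) := le_antisymm (hfT ▸ hmono hσT) hσ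
    obtain ⟨u, huσ, hu⟩ := exists_sSup_eq hmono hnat σ
    have hfu : f u = n := by
      obtain ⟨k, hk⟩ := hnat u
      have h1 := hbefore u huσ
      have h2 := hjump σ
      rw [hu, hfσ] at h2
      rw [hk] at h1 h2 ⊢
      have h1' : k < n + 1 := by exact_mod_cast h1
      have h2' : n + 1 ≤ k + 1 := by exact_mod_cast h2
      have : k = n := by omega
      rw [this]
    have hsup : sSup (f '' Iio σ) = n := hu.trans hfu
    -- A nonnegative time before `σ` at which the path has already its left limit at `σ`.
    obtain ⟨v, hv0, hvσ, hfv⟩ : ∃ v, 0 ≤ v ∧ v < σ ∧ f v = n := by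
      rcases le_total 0 u with h0 | h0
      · exact ⟨u, h0, huσ, hfu⟩
      · exact ⟨0, le_rfl, hσ0, by rw [hzero 0 le_rfl, ← hfu, hzero u h0]⟩
    obtain ⟨hint, hval⟩ := ih v hv0 hfv
    have hvT : v ≤ T := hvσ.le.trans hσT
    have hmass : μ (Ioc v T) = 1 := by rw [hIoc, hfT, hfv]; simp
    have hmσ : μ {σ} = 1 := by rw [hsing, hfσ, hsup]; simp
    have hsub : ({σ} : Set ℝ) ⊆ Ioc v T := by simp [hvσ, hσT]
    have hae : ({σ} : Set ℝ) =ᵐ[μ] Ioc v T :=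
      ae_eq_of_subset_of_measure_ge hsub (by rw [hmass, hmσ])
        (measurableSet_singleton σ).nullMeasurableSet (by rw [hmass]; simp)
    have hint2 : IntegrableOn G (Ioc v T) μ := by
      rw [← integrableOn_congr_set_ae hae]
      exact integrableOn_singleton (hx := by rw [hmσ]; exact ENNReal.one_lt_top)
    have hval2 : ∫ s in Ioc v T, G s ∂μ = g (n + 1) - g n := by
      rw [← setIntegral_congr_set hae, integral_singleton]
      simp [measureReal_def, hmσ, hG, hsup]
    rw [← Ioc_union_Ioc_eq_Ioc hv0 hvT]
    refine ⟨hint.union hint2, ?_⟩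
    rw [setIntegral_union (Ioc_disjoint_Ioc_of_le le_rfl) measurableSet_Ioc hint hint2, hval,
      hval2]
    ring

/-! ### Almost sure path properties of the Poisson process -/

lemma poisson_increment_ge_two {Ω : Type*} {m0 : MeasurableSpace Ω} {P : Measure Ω}
    [IsProbabilityMeasure P] {N : ℝ → Ω → ℝ} {lam : ℝ} (hN : IsPoissonProcess P N lam)
    {s t : ℝ} (hs : 0 ≤ s) (hst : s ≤ t) :
    P {ω | 2 ≤ N t ω - N s ω} ≤ ENNReal.ofReal ((lam * (t - s)) ^ 2) := by
  set x := lam * (t - s) with hx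
  have hx0 : 0 ≤ x := mul_nonneg hN.lam_pos.le (sub_nonneg.mpr hst)
  have hm : Measurable fun ω => N t ω - N s ω := (hN.meas t).sub (hN.meas s)
  have h0 := hN.law s t hs hst 0
  have h1 := hN.law s t hs hst 1
  rw [← hx] at h0 h1
  have hm0 : MeasurableSet {ω | N t ω - N s ω = ((0 : ℕ) : ℝ)} := hm (measurableSet_singleton _)
  have hm1 : MeasurableSet {ω | N t ω - N s ω = ((1 : ℕ) : ℝ)} := hm (measurableSet_singleton _)
  have hdisj : Disjoint {ω | N t ω - N s ω = ((0 : ℕ) : ℝ)}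
      {ω | N t ω - N s ω = ((1 : ℕ) : ℝ)} := by
    rw [Set.disjoint_left]
    intro ω h h'
    simp only [mem_ofPred_eq] at h h'
    rw [h] at h'
    norm_num at h'
  have hsub : {ω | 2 ≤ N t ω - N s ω} ⊆
      ({ω | N t ω - N s ω = ((0 : ℕ) : ℝ)} ∪ {ω | N t ω - N s ω = ((1 : ℕ) : ℝ)})ᶜ := by
    intro ω h
    simp only [mem_ofPred_eq, mem_compl_iff, mem_union, not_or] at h ⊢
    constructor <;> intro h' <;> rw [h'] at h <;> norm_num at h
  refine (measure_mono hsub).trans ?_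
  rw [prob_compl_eq_one_sub (hm0.union hm1), measure_union hdisj hm1, h0, h1,
    ← ENNReal.ofReal_add (by positivity) (by positivity), ← ENNReal.ofReal_one,
    ← ENNReal.ofReal_sub _ (by positivity)]
  apply ENNReal.ofReal_le_ofReal
  have he : 1 - x ≤ Real.exp (-x) := by linarith [Real.add_one_le_exp (-x)]
  simp only [pow_zero, Nat.factorial_zero, Nat.cast_one, pow_one, Nat.factorial_one, div_one]
  nlinarith [mul_le_mul_of_nonneg_right he (by linarith : (0 : ℝ) ≤ 1 + x)]

/-- The paths are simple: a double jump before time `T` would force an increment of at least two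
over one of the `T * n` grid intervals of length `1 / n`, an event of probability `O(1 / n)`. -/
lemma poisson_ae_simple {Ω : Type*} {m0 : MeasurableSpace Ω} {P : Measure Ω}
    [IsProbabilityMeasure P] {N : ℝ → Ω → ℝ} {lam : ℝ} (hN : IsPoissonProcess P N lam) :
    ∀ᵐ ω ∂P, ∀ s : ℝ, N s ω ≤ sSup ((fun u => N u ω) '' Iio s) + 1 := by
  have key : ∀ T : ℕ, ∀ᵐ ω ∂P, ∀ s : ℝ, 0 < s → s ≤ T → ∃ u < s, N s ω - N u ω < 2 := by
    intro T
    rw [ae_iff]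
    have hbound : ∀ n : ℕ, P {ω | ¬ ∀ s : ℝ, 0 < s → s ≤ T → ∃ u < s, N s ω - N u ω < 2} ≤
        ENNReal.ofReal (T * lam ^ 2 * (1 / ((n : ℝ) + 1))) := by
      intro n
      have hn : (0 : ℝ) < (n : ℝ) + 1 := by positivity
      have hsub : {ω | ¬ ∀ s : ℝ, 0 < s → s ≤ T → ∃ u < s, N s ω - N u ω < 2} ⊆
          ⋃ k ∈ Finset.range (T * (n + 1)),
            {ω | 2 ≤ N (((k : ℝ) + 1) / (n + 1)) ω - N ((k : ℝ) / (n + 1)) ω} := by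
        intro ω hω
        simp only [mem_ofPred_eq] at hω
        push Not at hω
        obtain ⟨s, hs0, hsT, hs⟩ := hω
        have hpos : 0 < s * (n + 1) := by positivity
        have hceil : 0 < ⌈s * (n + 1)⌉₊ := Nat.ceil_pos.mpr hpos
        obtain ⟨k, hk⟩ : ∃ k, ⌈s * (n + 1)⌉₊ = k + 1 := ⟨_, (Nat.succ_pred_eq_of_pos hceil).symm⟩
        have h1 : s * (n + 1) ≤ (k : ℝ) + 1 := by
          have := Nat.le_ceil (s * (n + 1)); rw [hk] at this; exact_mod_cast this
        have h2 : (k : ℝ) < s * (n + 1) := Nat.lt_ceil.mp (by omega)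
        have hkT : k < T * (n + 1) := by
          have : (k : ℝ) < (T : ℝ) * (n + 1) :=
            h2.trans_le (mul_le_mul_of_nonneg_right hsT hn.le)
          exact_mod_cast this
        simp only [mem_iUnion, Finset.mem_range, mem_ofPred_eq, exists_prop]
        refine ⟨k, hkT, (hs _ ((div_lt_iff₀ hn).mpr h2)).trans ?_⟩
        exact sub_le_sub_right (hN.mono ω ((le_div_iff₀ hn).mpr h1)) _
      refine (measure_mono hsub).trans ((measure_biUnion_finset_le _ _).trans ?_)
      have hterm : ∀ k ∈ Finset.range (T * (n + 1)),
          P {ω | 2 ≤ N (((k : ℝ) + 1) / (n + 1)) ω - N ((k : ℝ) / (n + 1)) ω} ≤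
            ENNReal.ofReal ((lam * (1 / (n + 1))) ^ 2) := by
        intro k _
        have hle : (k : ℝ) / (n + 1) ≤ ((k : ℝ) + 1) / (n + 1) := by gcongr; linarith
        have := poisson_increment_ge_two hN (by positivity : (0 : ℝ) ≤ (k : ℝ) / (n + 1)) hle
        have he : ((k : ℝ) + 1) / (n + 1) - (k : ℝ) / (n + 1) = 1 / ((n : ℝ) + 1) := by ring
        rwa [he] at this
      refine (Finset.sum_le_sum hterm).trans ?_
      rw [Finset.sum_const, Finset.card_range, nsmul_eq_mul, ← ENNReal.ofReal_natCast,
        ← ENNReal.ofReal_mul (by positivity)]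
      apply ENNReal.ofReal_le_ofReal
      push_cast
      apply le_of_eq
      field_simp
    have hlim : Tendsto (fun n : ℕ => ENNReal.ofReal (T * lam ^ 2 * (1 / ((n : ℝ) + 1)))) atTop
        (nhds 0) := by
      have := (tendsto_one_div_add_atTop_nhds_zero_nat (𝕜 := ℝ)).const_mul (T * lam ^ 2)
      rw [mul_zero] at this
      simpa using ENNReal.tendsto_ofReal this
    exact le_antisymm (ge_of_tendsto' hlim hbound) bot_le
  filter_upwards [ae_all_iff.mpr key] with ω hω s
  have hbdd : BddAbove ((fun u => N u ω) '' Iio s) :=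
    ⟨N s ω, by rintro _ ⟨v, hv, rfl⟩; exact hN.mono ω (le_of_lt hv)⟩
  rcases le_or_gt s 0 with hs | hs
  · have h1 : N (s - 1) ω ≤ sSup ((fun u => N u ω) '' Iio s) :=
      le_csSup hbdd ⟨s - 1, by simp, rfl⟩
    rw [hN.zero ω (s - 1) (by linarith)] at h1
    rw [hN.zero ω s hs]
    linarith
  · obtain ⟨T, hT⟩ := exists_nat_ge s
    obtain ⟨u, hus, hu⟩ := hω T s hs hT
    have h1 : N u ω ≤ sSup ((fun u => N u ω) '' Iio s) := le_csSup hbdd ⟨u, hus, rfl⟩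
    obtain ⟨a, ha⟩ := hN.natValued s ω
    obtain ⟨b, hb⟩ := hN.natValued u ω
    have h2 : (a : ℝ) ≤ b + 1 := by
      rw [ha, hb] at hu
      have : (a : ℝ) < b + 2 := by linarith
      have : a < b + 2 := by exact_mod_cast this
      exact_mod_cast (by omega : a ≤ b + 1)
    rw [ha]
    linarith

/-- Probability mass function of `N t`. -/
lemma poisson_marginal {Ω : Type*} {m0 : MeasurableSpace Ω} {P : Measure Ω}
    {N : ℝ → Ω → ℝ} {lam : ℝ} (hN : IsPoissonProcess P N lam) {t : ℝ} (ht : 0 ≤ t) (n : ℕ) :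
    P {ω | N t ω = n} =
      ENNReal.ofReal (Real.exp (-(lam * t)) * (lam * t) ^ n / (n.factorial : ℝ)) := by
  have := hN.law 0 t le_rfl ht n
  simpa [hN.zero _ 0 le_rfl] using this

lemma poisson_ae_unbounded {Ω : Type*} {m0 : MeasurableSpace Ω} {P : Measure Ω}
    [IsProbabilityMeasure P] {N : ℝ → Ω → ℝ} {lam : ℝ} (hN : IsPoissonProcess P N lam) :
    ∀ᵐ ω ∂P, ∀ c : ℝ, ∃ T : ℝ, c ≤ N T ω := by
  have key : ∀ n : ℕ, ∀ᵐ ω ∂P, ∃ T : ℝ, (n : ℝ) ≤ N T ω := by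
    intro n
    rw [ae_iff]
    have hbound : ∀ k : ℕ, P {ω | ¬ ∃ T : ℝ, (n : ℝ) ≤ N T ω} ≤
        ∑ j ∈ Finset.range n,
          ENNReal.ofReal (Real.exp (-(lam * k)) * (lam * k) ^ j / (j.factorial : ℝ)) := by
      intro k
      have hsub : {ω | ¬ ∃ T : ℝ, (n : ℝ) ≤ N T ω} ⊆
          ⋃ j ∈ Finset.range n, {ω | N (k : ℝ) ω = j} := by
        intro ω hω
        simp only [mem_ofPred_eq] at hω
        push Not at hω
        obtain ⟨j, hj⟩ := hN.natValued k ω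
        have hlt := hω k
        rw [hj] at hlt
        simp only [mem_iUnion, Finset.mem_range, mem_ofPred_eq, exists_prop]
        exact ⟨j, by exact_mod_cast hlt, hj⟩
      refine (measure_mono hsub).trans ((measure_biUnion_finset_le _ _).trans ?_)
      exact Finset.sum_le_sum fun j _ => (poisson_marginal hN (Nat.cast_nonneg k) j).le
    have hlim : Tendsto (fun k : ℕ => ∑ j ∈ Finset.range n,
        ENNReal.ofReal (Real.exp (-(lam * k)) * (lam * k) ^ j / (j.factorial : ℝ))) atTop
        (nhds 0) := by
      rw [← Finset.sum_const_zero (s := Finset.range n)]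
      refine tendsto_finsetSum _ fun j _ => ?_
      have h1 : Tendsto (fun k : ℕ => lam * (k : ℝ)) atTop atTop :=
        tendsto_natCast_atTop_atTop.const_mul_atTop hN.lam_pos
      have h2 := ((Real.tendsto_pow_mul_exp_neg_atTop_nhds_zero j).comp h1).div_const
        (j.factorial : ℝ)
      rw [zero_div] at h2
      have h3 := ENNReal.tendsto_ofReal h2
      rw [ENNReal.ofReal_zero] at h3
      refine h3.congr fun k => ?_
      simp only [Function.comp]
      rw [mul_comm]
    exact le_antisymm (ge_of_tendsto' hlim hbound) bot_le
  filter_upwards [ae_all_iff.mpr key] with ω hω c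
  obtain ⟨n, hn⟩ := exists_nat_ge c
  obtain ⟨T, hT⟩ := hω n
  exact ⟨T, hn.trans hT⟩

/-! ### The occupation measure and the recursion for `til` -/

/-- Joint measurability of the process, from right-continuous paths. -/
lemma poisson_measurable_uncurry {Ω : Type*} {m0 : MeasurableSpace Ω} {P : Measure Ω}
    {N : ℝ → Ω → ℝ} {lam : ℝ} (hN : IsPoissonProcess P N lam) :
    Measurable fun p : Ω × ℝ => N p.2 p.1 := by
  -- The time `s` is approximated strictly from the right by the next point of the grid `ℤ/(n+1)`.
  let r : ℕ → ℝ → ℝ := fun n s => ((⌊s * (n + 1)⌋ : ℝ) + 1) / (n + 1)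
  have hr_lt : ∀ n s, s < r n s := fun n s => by
    have hn : (0 : ℝ) < (n : ℝ) + 1 := by positivity
    exact (lt_div_iff₀ hn).mpr (Int.lt_floor_add_one _)
  have hr_le : ∀ n s, r n s ≤ s + 1 / ((n : ℝ) + 1) := fun n s => by
    have hn : (0 : ℝ) < (n : ℝ) + 1 := by positivity
    have hfl := Int.floor_le (s * ((n : ℝ) + 1))
    rw [div_le_iff₀ hn, add_mul, one_div, inv_mul_cancel₀ hn.ne']
    linarith
  refine measurable_of_tendsto_metrizable (f := fun n (p : Ω × ℝ) => N (r n p.2) p.1) ?_ ?_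
  · intro n
    have h1 : Measurable fun q : Ω × ℤ => N (((q.2 : ℝ) + 1) / (n + 1)) q.1 :=
      measurable_from_prod_countable_left fun k => hN.meas (((k : ℝ) + 1) / (n + 1))
    have h2 : Measurable fun p : Ω × ℝ => (p.1, ⌊p.2 * ((n : ℝ) + 1)⌋) :=
      measurable_fst.prodMk (Int.measurable_floor.comp (measurable_snd.mul_const _))
    exact h1.comp h2
  · rw [tendsto_pi_nhds]
    rintro ⟨ω, s⟩
    have hlim : Tendsto (fun n : ℕ => r n s) atTop (nhds s) := by
      refine tendsto_of_tendsto_of_tendsto_of_le_of_le tendsto_const_nhds ?_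
        (fun n => (hr_lt n s).le) (fun n => hr_le n s)
      simpa using (tendsto_one_div_add_atTop_nhds_zero_nat (𝕜 := ℝ)).const_add s
    exact (hN.rightCont ω s).tendsto.comp
      (tendsto_nhdsWithin_of_tendsto_nhds_of_eventually_within _ hlim
        (Eventually.of_forall fun n => (hr_lt n s).le))

/-- Each Poisson weight has total mass `1 / lam` in time: up to the factor `lam` it is a Gamma
density. -/
lemma lintegral_poisson_weight {lam : ℝ} (hlam : 0 < lam) (n : ℕ) :
    ∫⁻ s in Ioi (0 : ℝ),
      ENNReal.ofReal (Real.exp (-(lam * s)) * (lam * s) ^ n / (n.factorial : ℝ)) =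
      ENNReal.ofReal lam⁻¹ := by
  have hg := lintegral_gammaPDF_eq_one (by positivity : (0 : ℝ) < (n : ℝ) + 1) hlam
  rw [← lintegral_add_compl _ (measurableSet_Ioi (a := (0 : ℝ))), compl_Ioi,
    setLIntegral_congr Iio_ae_eq_Iic.symm, lintegral_gammaPDF_of_nonpos le_rfl, add_zero] at hg
  have hc : ∀ s ∈ Ioi (0 : ℝ),
      ENNReal.ofReal (Real.exp (-(lam * s)) * (lam * s) ^ n / (n.factorial : ℝ)) =
      ENNReal.ofReal lam⁻¹ * gammaPDF ((n : ℝ) + 1) lam s := by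
    intro s hs
    rw [gammaPDF_of_nonneg (le_of_lt hs), ← ENNReal.ofReal_mul (by positivity)]
    congr 1
    rw [Real.Gamma_nat_eq_factorial, add_sub_cancel_right, Real.rpow_natCast,
      Real.rpow_add_one hlam.ne', Real.rpow_natCast, mul_pow]
    field_simp
  rw [setLIntegral_congr_fun measurableSet_Ioi hc, lintegral_const_mul', hg, mul_one]
  exact ENNReal.ofReal_ne_top

/-- The expected occupation measure of the states of the process is `1 / lam` times the counting
measure. -/
lemma poisson_occupation {Ω : Type*} {m0 : MeasurableSpace Ω} {P : Measure Ω}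
    [IsProbabilityMeasure P] {N : ℝ → Ω → ℝ} {lam : ℝ} (hN : IsPoissonProcess P N lam) :
    (P.prod (volume.restrict (Ioi (0 : ℝ)))).map (fun p : Ω × ℝ => ⌊N p.2 p.1⌋₊) =
      ENNReal.ofReal lam⁻¹ • Measure.count := by
  have hm : Measurable fun p : Ω × ℝ => ⌊N p.2 p.1⌋₊ :=
    Nat.measurable_floor.comp (poisson_measurable_uncurry hN)
  refine Measure.ext_of_singleton fun n => ?_
  rw [Measure.map_apply hm (measurableSet_singleton n),
    Measure.prod_apply_symm (hm (measurableSet_singleton n)), Measure.smul_apply,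
    Measure.count_singleton, smul_eq_mul, mul_one, ← lintegral_poisson_weight hN.lam_pos n]
  refine setLIntegral_congr_fun measurableSet_Ioi fun s hs => ?_
  rw [← poisson_marginal hN (le_of_lt hs) n]
  congr 1
  ext ω
  obtain ⟨k, hk⟩ := hN.natValued s ω
  simp [hk]

/-- The closed form `til x = γ * ∑ h (n + x) * exp (-n)`. -/
lemma til_eq_tsum {Ω : Type*} {m0 : MeasurableSpace Ω} {P : Measure Ω}
    [IsProbabilityMeasure P] {N : ℝ → Ω → ℝ} {lam : ℝ} (hN : IsPoissonProcess P N lam)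
    (γ : ℝ) {h : ℕ → ℝ} (x : ℕ) (hs : Summable fun n : ℕ => h (n + x) * Real.exp (-n)) :
    ∫ ω, (∫ s in Ioi (0 : ℝ), γ * lam * h (⌊N s ω⌋₊ + x) * Real.exp (-(N s ω))) ∂P =
      γ * ∑' n : ℕ, h (n + x) * Real.exp (-n) := by
  have hlam := hN.lam_pos
  have hm : Measurable fun p : Ω × ℝ => ⌊N p.2 p.1⌋₊ :=
    Nat.measurable_floor.comp (poisson_measurable_uncurry hN)
  set φ : ℕ → ℝ := fun n => γ * lam * (h (n + x) * Real.exp (-n)) with hφ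
  have hφs : Summable φ := hs.mul_left _
  have heq : ∀ (ω : Ω) (s : ℝ),
      γ * lam * h (⌊N s ω⌋₊ + x) * Real.exp (-(N s ω)) = φ ⌊N s ω⌋₊ := by
    intro ω s
    obtain ⟨k, hk⟩ := hN.natValued s ω
    simp only [hφ, hk, Nat.floor_natCast]
    ring
  simp only [heq]
  have hint0 : Integrable φ (ENNReal.ofReal lam⁻¹ • Measure.count) :=
    (integrable_count_iff.mpr hφs.norm).smul_measure ENNReal.ofReal_ne_top
  have hint : Integrable φ
      ((P.prod (volume.restrict (Ioi (0 : ℝ)))).map (fun p : Ω × ℝ => ⌊N p.2 p.1⌋₊)) := by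
    rw [poisson_occupation hN]; exact hint0
  have hφm : AEStronglyMeasurable φ
      ((P.prod (volume.restrict (Ioi (0 : ℝ)))).map (fun p : Ω × ℝ => ⌊N p.2 p.1⌋₊)) :=
    hint.aestronglyMeasurable
  have hint' := (integrable_map_measure hφm hm.aemeasurable).mp hint
  have h1 := integral_prod _ hint'
  simp only [Function.comp] at h1
  rw [← h1, ← integral_map hm.aemeasurable hφm, poisson_occupation hN, integral_smul_measure,
    integral_countable (integrable_count_iff.mpr hφs.norm)]
  simp only [measureReal_def, Measure.count_singleton, ENNReal.toReal_one, hφ,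
    tsum_mul_left, ENNReal.toReal_ofReal (inv_nonneg.mpr hlam.le), smul_eq_mul]
  field_simp

lemma summable_shift {h : ℕ → ℝ} (hh : ∃ C : ℝ, ∀ n : ℕ, |h n| ≤ C) (x : ℕ) :
    Summable fun n : ℕ => h (n + x) * Real.exp (-n) := by
  obtain ⟨C, hC⟩ := hh
  refine Summable.of_norm_bounded (Real.summable_exp_neg_nat.mul_left C) fun n => ?_
  rw [Real.norm_eq_abs, abs_mul, abs_of_pos (Real.exp_pos _)]
  exact mul_le_mul_of_nonneg_right (hC _) (Real.exp_pos _).le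

lemma tsum_recursion {h : ℕ → ℝ} (hh : ∃ C : ℝ, ∀ n : ℕ, |h n| ≤ C) (x : ℕ) :
    ∑' n : ℕ, h (n + x) * Real.exp (-n) =
      h x + Real.exp (-1) * ∑' n : ℕ, h (n + (x + 1)) * Real.exp (-n) := by
  rw [(summable_shift hh x).tsum_eq_zero_add, ← tsum_mul_left]
  congr 1
  · simp
  · refine tsum_congr fun n => ?_
    rw [show n + 1 + x = n + (x + 1) by ring]
    push_cast
    rw [neg_add, Real.exp_add]
    ring

/-- Predictable representation of `Y_t = E[h(N_{τ-}) | G_t]` with respect to the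
compensated martingales `M^τ_t = 1_{τ ≤ t} - γλ(t ∧ τ)` and `M_t = N_t - λt`. -/
theorem predictable_representation_poisson
    {Ω : Type*} {m0 : MeasurableSpace Ω} (P : Measure Ω) [IsProbabilityMeasure P]
    (N : ℝ → Ω → ℝ) (lam : ℝ) (hN : IsPoissonProcess P N lam)
    (Θ : Ω → ℝ) (hΘ_meas : Measurable Θ)
    (hΘ_law : ∀ x : ℝ, 0 ≤ x → P {ω | x < Θ ω} = ENNReal.ofReal (Real.exp (-x)))
    (hΘ_indep : Indep (MeasurableSpace.comap Θ inferInstance) (natFilInf N) P)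
    (τ : Ω → ℝ) (hτ : ∀ ω, τ ω = sInf {t : ℝ | 0 ≤ t ∧ Θ ω ≤ N t ω})
    (γ : ℝ) (hγ : γ = 1 - Real.exp (-1))
    (h : ℕ → ℝ) (hh_bdd : ∃ C : ℝ, ∀ n : ℕ, |h n| ≤ C)
    (til : ℕ → ℝ)
    (htil : ∀ x : ℕ, til x =
      ∫ ω, (∫ s in Set.Ioi (0 : ℝ),
        γ * lam * h (Nat.floor (N s ω) + x) * Real.exp (-(N s ω))) ∂P)
    (Nminus : ℝ → Ω → ℝ)
    (hNminus : ∀ (s : ℝ) (ω : Ω), Nminus s ω = sSup ((fun u => N u ω) '' Set.Iio s))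
    (Y : ℝ → Ω → ℝ)
    (hY : ∀ (t : ℝ) (ω : Ω), Y t ω =
      Set.indicator {ω' | τ ω' ≤ t} (fun ω' => h (Nat.floor (Nminus (τ ω') ω'))) ω
      + Set.indicator {ω' | t < τ ω'} (fun ω' => til (Nat.floor (N t ω'))) ω) :
    ∀ᵐ ω ∂P, ∀ t : ℝ, 0 ≤ t →
      Y t ω = til 0
        + Set.indicator {ω' | τ ω' ≤ t}
            (fun ω' => h (Nat.floor (Nminus (τ ω') ω'))
              - til (Nat.floor (Nminus (τ ω') ω') + 1)) ω
        - (∫ s in (0 : ℝ)..(min t (τ ω)),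
            γ * lam * (h (Nat.floor (Nminus s ω)) - til (Nat.floor (Nminus s ω) + 1)))
        + (∫ s in Set.Ioc 0 (min t (τ ω)),
            (til (Nat.floor (Nminus s ω) + 1) - til (Nat.floor (Nminus s ω)))
              ∂(stieltjesMeasureOf (fun u => N u ω) (hN.mono ω) (hN.rightCont ω)))
        - (∫ s in (0 : ℝ)..(min t (τ ω)),
            lam * (til (Nat.floor (Nminus s ω) + 1) - til (Nat.floor (Nminus s ω)))) := by
  have htil' : ∀ x, til x = γ * ∑' n : ℕ, h (n + x) * Real.exp (-n) := fun x => by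
    rw [htil x]
    exact til_eq_tsum hN γ x (summable_shift hh_bdd x)
  have hrec : ∀ x, til x = γ * h x + (1 - γ) * til (x + 1) := fun x => by
    rw [htil' x, htil' (x + 1), tsum_recursion hh_bdd x, hγ]
    ring
  have hΘ_pos : ∀ᵐ ω ∂P, 0 < Θ ω := by
    have h1 : P {ω | 0 < Θ ω} = 1 := by simpa using hΘ_law 0 le_rfl
    exact (mem_ae_iff_prob_eq_one (measurableSet_lt measurable_const hΘ_meas)).mpr h1
  filter_upwards [poisson_ae_simple hN, poisson_ae_unbounded hN, hΘ_pos] with ω hsimple hunb hΘ0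
  intro t ht
  -- By the recursion for `til`, the two compensators cancel.
  have hcancel : (∫ s in (0 : ℝ)..(min t (τ ω)),
        γ * lam * (h (Nat.floor (Nminus s ω)) - til (Nat.floor (Nminus s ω) + 1))) =
      -∫ s in (0 : ℝ)..(min t (τ ω)),
        lam * (til (Nat.floor (Nminus s ω) + 1) - til (Nat.floor (Nminus s ω))) := by
    rw [← intervalIntegral.integral_neg]
    congr 1
    funext s
    rw [hrec (Nat.floor (Nminus s ω))]
    ring
  obtain ⟨T, hT⟩ := hunb (Θ ω)
  obtain ⟨hτ0, -, hNτ, hbefore⟩ :=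
    hitting_time (hN.mono ω) (hN.rightCont ω) (hN.zero ω) hΘ0 hT
  rw [← hτ ω] at hτ0 hNτ hbefore
  have hnat : ∀ t, ∃ n : ℕ, N t ω = n := fun t => hN.natValued t ω
  obtain ⟨n, hn⟩ := hnat (min t (τ ω))
  have hstieltjes := (stieltjes_telescope (hN.mono ω) (hN.rightCont ω) (hN.zero ω) hnat hsimple
    til n (min t (τ ω)) (le_min ht hτ0.le) hn).2
  simp only [← hNminus] at hstieltjes hsimple
  rw [hcancel, hstieltjes, hY t ω]
  rcases le_or_gt (τ ω) t with hle | hlt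
  · -- At `τ` the path makes a unit jump, since it crosses the level `Θ` there.
    have hfloor : Nat.floor (Nminus (τ ω) ω) + 1 = n := by
      rw [min_eq_right hle] at hn
      obtain ⟨u, hu, hNu⟩ := exists_sSup_eq (hN.mono ω) hnat (τ ω)
      rw [← hNminus] at hNu
      obtain ⟨k, hk⟩ := hnat u
      have h1 := hsimple (τ ω)
      have h2 := (hbefore u hu).trans_le hNτ
      rw [hNu, hk, hn] at h1
      simp only [hk, hn] at h2
      rw [hNu, hk, Nat.floor_natCast]
      have h1' : n ≤ k + 1 := by exact_mod_cast h1
      have h2' : k < n := by exact_mod_cast h2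
      omega
    rw [indicator_of_mem (by exact hle), indicator_of_notMem (by simpa using hle),
      indicator_of_mem (by exact hle), hfloor]
    ring
  · rw [min_eq_left hlt.le] at hn
    rw [indicator_of_notMem (by simpa using hlt), indicator_of_mem (by exact hlt),
      indicator_of_notMem (by simpa using hlt), hn, Nat.floor_natCast]
    ring
end
end
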